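/- Let 1/2 < γ ≤ 1, let A : ℝ³ → ℝ³⊗ℝ³ be a matrix-valued field, let n ≥ 0 be an integer with ‖∇^{n+1}A‖_1 < ∞, and let Y, Ỹ ∈ 𝒞^γ be closed γ-Hölder curves. Then the velocity fields V^Y(x) := ∫_0^1 A(x − Y_η) dY_η and V^{Ỹ}(x) := ∫_0^1 A(x − Ỹ_η) dỸ_η (Young integrals) satisfy ‖∇^n V^Y − ∇^n V^{Ỹ}‖ ≤ C_γ ‖∇^{n+1} A‖_1 (‖Y‖_γ + ‖Ỹ‖_γ + ‖Ỹ‖_γ ‖Y‖_γ) ‖Y − Ỹ‖_γ^*, where C_γ ≥ 1 is the constant from the Young integral estimate, depending only on γ. -/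

import Mathlib

/-!
The proof rests on the sewing argument for dyadic sums. If a germ `Ξ(s, t)` satisfies
`‖Ξ(s,t) - Ξ(s,u) - Ξ(u,t)‖ ≤ K (u - s)^γ (t - u)^γ`, then passing from `2^k` to `2^(k+1)` dyadic
intervals of `[a, b]` changes the sum by at most `K (b - a)^(2γ) 2^((1 - 2γ) k)`. Since `2γ > 1`
the sums converge, and a limit `I` satisfies `‖I - Ξ(a,b)‖ ≤ C_γ K (b - a)^(2γ)` with
`C_γ = 1 / (1 - 2^(1 - 2γ))` (`norm_lim_dySum_le`). For `Ξ(s,t) = (X_s - X_η) ⊗ (Y_t - Y_s)` this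
is the Young estimate.

For the velocity fields, the germ `∇^m A(x - Z_s)(Z_t - Z_s)` has defect
`(∇^m A(x - Z_s) - ∇^m A(x - Z_u))(Z_t - Z_u)`. Only `∇^{n+1} A` and `∇^{n+2} A` are globally
bounded, but `Z` stays in a compact set, so for every `m ≤ n` the dyadic sums converge uniformly
for `x` in any given ball. Differentiation therefore commutes with the limit, and `∇^n V^Z(x)` is
the limit of the dyadic sums of the germ with `m = n` (`tendsto_iteratedFDeriv`).

Finally the sewing bound is applied to the difference of the germs of `Y` and `Ỹ`. With
`G(y) = ∇^n A(x - y)` its defect is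
`(G(Y_s) - G(Y_u)) (Y - Ỹ)_{u,t} + (G(Y_s) - G(Y_u) - G(Ỹ_s) + G(Ỹ_u)) Ỹ_{u,t}`,
and a second-order mean value estimate (`norm_second_diff_le`) bounds it by
`‖∇^{n+1} A‖_1 (‖Y‖_γ + ‖Ỹ‖_γ + ‖Y‖_γ ‖Ỹ‖_γ) ‖Y - Ỹ‖_γ^* (u - s)^γ (t - u)^γ`
(`almostAdd_germ_sub`). The curves being closed, the coarsest germ `Ξ(0,1)` vanishes.
-/

/- Common framework: Hölder curves on [0,1], Riemann–Stieltjes/Young/rough integrals as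
limits of (compensated) partition sums, controlled paths, and covariations. -/

noncomputable section

open Set Filter Topology MeasureTheory
open scoped ENNReal

/-- Three dimensional Euclidean space. -/
abbrev E3 : Type := EuclideanSpace ℝ (Fin 3)

/-- `ℝ³ ⊗ ℝ³`, realized as (continuous) linear endomorphisms of `ℝ³`. -/
abbrev M3 : Type := E3 →L[ℝ] E3

/-- Outer (tensor) product `a ⊗ b` of two vectors, as the linear map `v ↦ ⟪b, v⟫ • a`. -/
def oProd (a b : E3) : M3 := (innerSL ℝ b).smulRight a

/-- The canonical basis vectors of `ℝ³`. -/
def e3 (k : Fin 3) : E3 := EuclideanSpace.single k 1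

/-- The `i`-th component of a vector of `ℝ³`. -/
def ecomp (i : Fin 3) (v : E3) : ℝ := @inner ℝ _ _ (e3 i) v

/-- The `(i,k)` entry of a matrix. -/
def mentry (i k : Fin 3) (M : M3) : ℝ := ecomp i (M (e3 k))

/-- `γ`-Hölder seminorm `‖X‖_γ` over the interval `[0,1]`. -/
def hSemi {F : Type*} [NormedAddCommGroup F] (γ : ℝ) (X : ℝ → F) : ℝ :=
  sSup {r | ∃ s ∈ Icc (0:ℝ) 1, ∃ t ∈ Icc (0:ℝ) 1, s ≠ t ∧ r = ‖X s - X t‖ / |s - t| ^ γ}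

/-- Supremum norm `‖X‖_∞` over the interval `[0,1]`. -/
def sNorm {F : Type*} [NormedAddCommGroup F] (X : ℝ → F) : ℝ :=
  sSup {r | ∃ s ∈ Icc (0:ℝ) 1, r = ‖X s‖}

/-- The norm `‖X‖_γ^* = ‖X‖_∞ + ‖X‖_γ`. -/
def hStar {F : Type*} [NormedAddCommGroup F] (γ : ℝ) (X : ℝ → F) : ℝ :=
  sNorm X + hSemi γ X

/-- `X` is `γ`-Hölder continuous on `[0,1]`. -/
def HolderOn {F : Type*} [NormedAddCommGroup F] (γ : ℝ) (X : ℝ → F) : Prop :=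
  ∃ C : ℝ, ∀ s ∈ Icc (0:ℝ) 1, ∀ t ∈ Icc (0:ℝ) 1, ‖X s - X t‖ ≤ C * |s - t| ^ γ

/-- A closed continuous curve parametrized by `[0,1]`. -/
def ClosedCurve {F : Type*} [NormedAddCommGroup F] (X : ℝ → F) : Prop :=
  ContinuousOn X (Icc (0:ℝ) 1) ∧ X 0 = X 1

/-- Membership in `𝒞^γ`: closed curve with finite `γ`-Hölder norm. -/
def MemC {F : Type*} [NormedAddCommGroup F] (γ : ℝ) (X : ℝ → F) : Prop :=
  ClosedCurve X ∧ HolderOn γ X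

/-- A partition `a = t 0 ≤ t 1 ≤ ⋯ ≤ t n = b` of the interval `[a,b]`. -/
structure Ptn (a b : ℝ) where
  n : ℕ
  t : ℕ → ℝ
  first : t 0 = a
  last : t n = b
  mono : ∀ i < n, t i ≤ t (i + 1)

/-- The mesh of the partition is at most `δ`. -/
def Ptn.MeshLE {a b : ℝ} (P : Ptn a b) (δ : ℝ) : Prop :=
  ∀ i < P.n, P.t (i + 1) - P.t i ≤ δ

/-- `I` is the limit of the partition sums `S P` as the mesh of `P` tends to zero. -/
def RSLimit {F : Type*} [NormedAddCommGroup F] (a b : ℝ) (S : Ptn a b → F) (I : F) : Prop :=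
  ∀ ε > 0, ∃ δ > 0, ∀ P : Ptn a b, P.MeshLE δ → ‖S P - I‖ ≤ ε

/-- `‖∇^j φ‖ = sup_x ‖∇^j φ(x)‖`. -/
def tnorm {F : Type*} [NormedAddCommGroup F] [NormedSpace ℝ F] (j : ℕ) (φ : E3 → F) : ℝ :=
  sSup (Set.range fun x => ‖iteratedFDeriv ℝ j φ x‖)

/-- `‖∇^m φ‖_n = Σ_{k=0}^n ‖∇^{m+k} φ‖`. -/
def nablaNorm {F : Type*} [NormedAddCommGroup F] [NormedSpace ℝ F]
    (m n : ℕ) (φ : E3 → F) : ℝ :=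
  ∑ k ∈ Finset.range (n + 1), tnorm (m + k) φ

/-- `‖∇^m φ‖_n < ∞` : `φ` is `(m+n)` times continuously differentiable with
`sup_x ‖∇^k φ(x)‖ < ∞` for every `m ≤ k ≤ m+n`. -/
def NablaBdd {F : Type*} [NormedAddCommGroup F] [NormedSpace ℝ F] (m n : ℕ) (φ : E3 → F) : Prop :=
  ContDiff ℝ (m + n) φ ∧
    ∀ k : ℕ, m ≤ k → k ≤ m + n → BddAbove (Set.range fun x => ‖iteratedFDeriv ℝ k φ x‖)

/-- Riemann–Stieltjes sum for the line integral `∫_0^1 A(x - Z_η) dZ_η`. -/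
def youngRS (A : E3 → M3) (Z : ℝ → E3) (x : E3) {a b : ℝ} (P : Ptn a b) : E3 :=
  ∑ i ∈ Finset.range P.n, A (x - Z (P.t i)) (Z (P.t (i + 1)) - Z (P.t i))

/-- `V = V^Z` is the Young velocity field `V^Z(x) = ∫_0^1 A(x - Z_η) dZ_η`, each value being
the limit of Riemann–Stieltjes sums. -/
def IsYoungVelocity (A : E3 → M3) (Z : ℝ → E3) (V : E3 → E3) : Prop :=
  ∀ x : E3, RSLimit 0 1 (fun P => youngRS A Z x P) (V x)

/-- `C` is a constant realizing the Young estimate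
`|∫_η^ξ (X_ρ - X_η) ⊗ dY_ρ| ≤ C ‖X‖_γ ‖Y‖_γ |ξ - η|^{2γ}`. -/
def YoungEstimate (γ C : ℝ) : Prop :=
  ∀ X Y : ℝ → E3, HolderOn γ X → HolderOn γ Y →
    ∀ η ∈ Icc (0:ℝ) 1, ∀ ξ ∈ Icc (0:ℝ) 1, η ≤ ξ →
      ∀ I : M3,
        RSLimit η ξ (fun P => ∑ i ∈ Finset.range P.n,
          oProd (X (P.t i) - X η) (Y (P.t (i + 1)) - Y (P.t i))) I →
        ‖I‖ ≤ C * hSemi γ X * hSemi γ Y * (ξ - η) ^ (2 * γ)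

/-- Continuity of `t ↦ Y(t)` from `[0,T]` into `𝒞^γ` (with the norm `‖·‖_γ^*`). -/
def ContXT (γ T : ℝ) (Y : ℝ → ℝ → E3) : Prop :=
  ∀ t ∈ Icc 0 T, ∀ ε > 0, ∃ δ > 0, ∀ s ∈ Icc 0 T, |s - t| ≤ δ →
    hStar γ (fun ξ => Y s ξ - Y t ξ) ≤ ε

/-- The norm `‖Y‖_{𝐗_T} = sup_{t ∈ [0,T]} ‖Y(t)‖_γ^*`. -/
def xnorm (γ T : ℝ) (Y : ℝ → ℝ → E3) : ℝ :=
  sSup {r | ∃ t ∈ Icc 0 T, r = hStar γ (Y t)}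

/-- Membership in `𝐗_T = C([0,T], 𝒞^γ)`. -/
def MemXT (γ T : ℝ) (Y : ℝ → ℝ → E3) : Prop :=
  (∀ t ∈ Icc 0 T, MemC γ (Y t)) ∧ ContXT γ T Y

/-- The map `F(Y)(t)_ξ = X_ξ + ∫_0^t v_s(Y(s)_ξ) ds`. -/
def Fmap (X : ℝ → E3) (v : ℝ → E3 → E3) (Y : ℝ → ℝ → E3) : ℝ → ℝ → E3 :=
  fun t ξ => X ξ + ∫ s in (0:ℝ)..t, v s (Y s ξ)

/-- The controlled derivative of `F(Y)`:
`F(Y)'(t)_ξ = Id + ∫_0^t ∇v_s(Y(s)_ξ) ∘ Y'(s)_ξ ds`. -/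
def Fmap' (v : ℝ → E3 → E3) (Y : ℝ → ℝ → E3) (Y' : ℝ → ℝ → M3) : ℝ → ℝ → M3 :=
  fun t ξ => ContinuousLinearMap.id ℝ E3
    + ∫ s in (0:ℝ)..t, (fderiv ℝ (v s) (Y s ξ)).comp (Y' s ξ)

/-- `Y` solves the vortex filament equation on `[0,T]` with initial condition `X`,
the velocity fields being given by Young line integrals. -/
def IsYoungSolution (T : ℝ) (A : E3 → M3) (X : ℝ → E3) (Y : ℝ → ℝ → E3) : Prop :=
  ∃ v : ℝ → E3 → E3, (∀ s ∈ Icc 0 T, IsYoungVelocity A (Y s) (v s)) ∧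
    ∀ t ∈ Icc 0 T, ∀ ξ ∈ Icc (0:ℝ) 1, Y t ξ = X ξ + ∫ s in (0:ℝ)..t, v s (Y s ξ)

/-- The same, on the half open interval `[0,T)`. -/
def IsYoungSolutionLt (T : ℝ) (A : E3 → M3) (X : ℝ → E3) (Y : ℝ → ℝ → E3) : Prop :=
  ∃ v : ℝ → E3 → E3, (∀ s ∈ Ico 0 T, IsYoungVelocity A (Y s) (v s)) ∧
    ∀ t ∈ Ico 0 T, ∀ ξ ∈ Icc (0:ℝ) 1, Y t ξ = X ξ + ∫ s in (0:ℝ)..t, v s (Y s ξ)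

/-- `β`-Hölder norm of a two-parameter function on `[0,1]²` (vanishing on the diagonal). -/
def rnorm {F : Type*} [NormedAddCommGroup F] (β : ℝ) (W : ℝ → ℝ → F) : ℝ :=
  sSup {r | ∃ s ∈ Icc (0:ℝ) 1, ∃ t ∈ Icc (0:ℝ) 1, s ≠ t ∧ r = ‖W s t‖ / |s - t| ^ β}

/-- Finiteness of the `β`-Hölder norm of a two-parameter function. -/
def RBddOn {F : Type*} [NormedAddCommGroup F] (β : ℝ) (W : ℝ → ℝ → F) : Prop :=
  ∃ C : ℝ, ∀ s ∈ Icc (0:ℝ) 1, ∀ t ∈ Icc (0:ℝ) 1, ‖W s t‖ ≤ C * |s - t| ^ β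

/-- `(X, 𝕏²)` is a `γ`-rough path: `X` is `γ`-Hölder, the area process `𝕏²` is continuous,
satisfies the compatibility (Chen) relation and has finite `2γ`-Hölder norm. -/
structure IsRoughPath (γ : ℝ) (X : ℝ → E3) (XX : ℝ → ℝ → M3) : Prop where
  cont : ContinuousOn X (Icc (0:ℝ) 1)
  holder : HolderOn γ X
  cont2 : ContinuousOn (fun p : ℝ × ℝ => XX p.1 p.2) (Icc (0:ℝ) 1 ×ˢ Icc (0:ℝ) 1)
  chen : ∀ ξ ∈ Icc (0:ℝ) 1, ∀ η ∈ Icc (0:ℝ) 1, ∀ ρ ∈ Icc (0:ℝ) 1,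
    XX ξ ρ - XX ξ η - XX η ρ = oProd (X ξ - X η) (X η - X ρ)
  bdd : RBddOn (2 * γ) XX

/-- Remainder `R^Y_{ηξ} = Y_ξ - Y_η - Y'_η (X_ξ - X_η)` of a controlled path. -/
def ctrlRem (X Y : ℝ → E3) (Y' : ℝ → M3) (η ξ : ℝ) : E3 :=
  Y ξ - Y η - Y' η (X ξ - X η)

/-- `(Y, Y')` is a (closed) path weakly controlled by `X`, i.e. `Y ∈ 𝒟_X`. -/
structure IsControlled (γ : ℝ) (X Y : ℝ → E3) (Y' : ℝ → M3) : Prop where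
  closed : Y 0 = Y 1
  cont : ContinuousOn Y (Icc (0:ℝ) 1)
  contD : ContinuousOn Y' (Icc (0:ℝ) 1)
  holderD : HolderOn γ Y'
  rem : RBddOn (2 * γ) (fun η ξ => ctrlRem X Y Y' η ξ)

/-- The norm `‖Y‖_D = ‖Y'‖_γ + ‖R^Y‖_{2γ} + ‖Y'‖_∞` on `𝒟_X`. -/
def dnorm (γ : ℝ) (X Y : ℝ → E3) (Y' : ℝ → M3) : ℝ :=
  hSemi γ Y' + rnorm (2 * γ) (fun η ξ => ctrlRem X Y Y' η ξ) + sNorm Y'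

/-- The norm `‖Y‖_D^* = ‖Y‖_D + ‖Y‖_∞`. -/
def dnormStar (γ : ℝ) (X Y : ℝ → E3) (Y' : ℝ → M3) : ℝ :=
  dnorm γ X Y Y' + sNorm Y

/-- The constant `C_X = 1 + ‖X‖_γ + ‖𝕏²‖_{2γ}`. -/
def CXconst (γ : ℝ) (X : ℝ → E3) (XX : ℝ → ℝ → M3) : ℝ :=
  1 + hSemi γ X + rnorm (2 * γ) XX

/-- The compensator `P W Qᵀ` (matrix product), i.e. `(P W Qᵀ)^{ij} = P^{ik} W^{kl} Q^{jl}`. -/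
def ctrlComp (P Q W : M3) : M3 := P ∘L W ∘L (ContinuousLinearMap.adjoint Q)

/-- Compensated Riemann sum
`Σ_i [ Y_{t_i} ⊗ (Z_{t_{i+1}} - Z_{t_i}) + Y'_{t_i} Z'_{t_i} 𝕏²_{t_{i+1} t_i} ]`
for the rough integral `∫ Y ⊗ dZ` of two weakly controlled paths. -/
def roughPairRS (XX : ℝ → ℝ → M3) (Y Z : ℝ → E3) (Y' Z' : ℝ → M3)
    {a b : ℝ} (P : Ptn a b) : M3 :=
  ∑ i ∈ Finset.range P.n,
    (oProd (Y (P.t i)) (Z (P.t (i + 1)) - Z (P.t i))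
      + ctrlComp (Y' (P.t i)) (Z' (P.t i)) (XX (P.t (i + 1)) (P.t i)))

/-- The contraction `Σ_{k,l} W^{kl} (W'(e_k))(Z'(e_l))`, the compensator of a matrix-valued
controlled integrand `W` (with controlled derivative `W'`) against `dZ`. -/
def comp2 (W' : E3 →L[ℝ] M3) (Z' : M3) (W : M3) : E3 :=
  ∑ k : Fin 3, ∑ l : Fin 3, ecomp k (W (e3 l)) • (W' (e3 k)) (Z' (e3 l))

/-- Compensated Riemann sum for the rough line integral `∫_0^1 A(x - Z_η) dZ_η` along a path
`Z` weakly controlled by `X`, the integrand `η ↦ A(x - Z_η)` having controlled derivative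
`-∇A(x - Z_η) ∘ Z'_η`. -/
def roughVelRS (A : E3 → M3) (XX : ℝ → ℝ → M3) (Z : ℝ → E3) (Z' : ℝ → M3)
    (x : E3) {a b : ℝ} (P : Ptn a b) : E3 :=
  ∑ i ∈ Finset.range P.n,
    (A (x - Z (P.t i)) (Z (P.t (i + 1)) - Z (P.t i))
      + comp2 (-((fderiv ℝ A (x - Z (P.t i))).comp (Z' (P.t i)))) (Z' (P.t i))
          (XX (P.t (i + 1)) (P.t i)))

/-- `V = V^Z` is the rough velocity field `V^Z(x) = ∫_0^1 A(x - Z_η) dZ_η`, each value being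
the limit of compensated Riemann sums. -/
def IsRoughVelocity (A : E3 → M3) (XX : ℝ → ℝ → M3) (Z : ℝ → E3) (Z' : ℝ → M3)
    (V : E3 → E3) : Prop :=
  ∀ x : E3, RSLimit 0 1 (fun P => roughVelRS A XX Z Z' x P) (V x)

/-- Continuity of `t ↦ (Y(t), Y'(t))` from `[0,T]` into `𝒟_X` (with the norm `‖·‖_D^*`). -/
def ContDT (γ T : ℝ) (X : ℝ → E3) (Y : ℝ → ℝ → E3) (Y' : ℝ → ℝ → M3) : Prop :=
  ∀ t ∈ Icc 0 T, ∀ ε > 0, ∃ δ > 0, ∀ s ∈ Icc 0 T, |s - t| ≤ δ →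
    dnormStar γ X (fun ξ => Y s ξ - Y t ξ) (fun ξ => Y' s ξ - Y' t ξ) ≤ ε

/-- Membership in `𝐃_{X,T} = C([0,T], 𝒟_X)`. -/
def MemDT (γ T : ℝ) (X : ℝ → E3) (Y : ℝ → ℝ → E3) (Y' : ℝ → ℝ → M3) : Prop :=
  (∀ t ∈ Icc 0 T, IsControlled γ X (Y t) (Y' t)) ∧ ContDT γ T X Y Y'

/-- The norm `‖Y‖_{𝐃_{X,T}} = sup_{t ∈ [0,T]} ‖Y(t)‖_D^*`. -/
def dxnorm (γ T : ℝ) (X : ℝ → E3) (Y : ℝ → ℝ → E3) (Y' : ℝ → ℝ → M3) : ℝ :=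
  sSup {r | ∃ t ∈ Icc 0 T, r = dnormStar γ X (Y t) (Y' t)}

/-- `(Y, Y')` solves the vortex filament equation on `[0,T]` with initial condition `X`,
the velocity fields being given by rough line integrals over the rough path `(X, 𝕏²)`. -/
def IsRoughSolution (T : ℝ) (A : E3 → M3) (X : ℝ → E3) (XX : ℝ → ℝ → M3)
    (Y : ℝ → ℝ → E3) (Y' : ℝ → ℝ → M3) : Prop :=
  ∃ v : ℝ → E3 → E3,
    (∀ s ∈ Icc 0 T, IsRoughVelocity A XX (Y s) (Y' s) (v s)) ∧
    (∀ t ∈ Icc 0 T, ∀ ξ ∈ Icc (0:ℝ) 1, Y t ξ = X ξ + ∫ s in (0:ℝ)..t, v s (Y s ξ)) ∧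
    (∀ t ∈ Icc 0 T, ∀ ξ ∈ Icc (0:ℝ) 1, Y' t ξ = Fmap' v Y Y' t ξ)

/-- `YY` is the lift (area process) `𝕐²_{ab} = ∫_a^b (Y_η - Y_a) ⊗ dY_η` of the weakly
controlled path `(Y, Y')`, defined through compensated Riemann sums. -/
def IsLift (XX : ℝ → ℝ → M3) (Y : ℝ → E3) (Y' : ℝ → M3) (YY : ℝ → ℝ → M3) : Prop :=
  ∀ a ∈ Icc (0:ℝ) 1, ∀ b ∈ Icc (0:ℝ) 1, a ≤ b →
    RSLimit a b (fun P => ∑ i ∈ Finset.range P.n,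
      (oProd (Y (P.t i) - Y a) (Y (P.t (i + 1)) - Y (P.t i))
        + ctrlComp (Y' (P.t i)) (Y' (P.t i)) (XX (P.t (i + 1)) (P.t i)))) (YY a b)

/-- `ε`-approximation `ξ ↦ ∫_0^ξ (U_{ρ+ε} - U_ρ)(W_{ρ+ε} - W_ρ) dρ / ε` of the covariation
(the processes being extended by their value at `1`). -/
def covApprox (U W : ℝ → ℝ) (ε ξ : ℝ) : ℝ :=
  ∫ ρ in (0:ℝ)..ξ, (U (min (ρ + ε) 1) - U ρ) * (W (min (ρ + ε) 1) - W ρ) / ε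

/-- `C = [U, W]` is the covariation of the processes `U` and `W`: the `ε`-approximations
converge uniformly in probability (ucp) as `ε → 0⁺`. -/
def HasCovariation {Ω : Type*} [MeasurableSpace Ω] (P : Measure Ω)
    (U W : Ω → ℝ → ℝ) (C : Ω → ℝ → ℝ) : Prop :=
  ∀ δ : ℝ, 0 < δ →
    Tendsto (fun ε : ℝ =>
        P {ω | δ ≤ ⨆ ξ : Icc (0:ℝ) 1, |covApprox (U ω) (W ω) ε ξ.1 - C ω ξ.1|})
      (𝓝[>] (0:ℝ)) (𝓝 (0:ℝ≥0∞))

/-! ### Dyadic sums of almost additive germs -/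

/-- The `i`-th point of the dyadic partition of `[a, b]` into `2 ^ k` intervals. -/
def dyPt (a b : ℝ) (k i : ℕ) : ℝ := a + i * ((b - a) / 2 ^ k)

/-- The dyadic partition of `[a, b]` into `2 ^ k` intervals of equal length. -/
def dyadic {a b : ℝ} (hab : a ≤ b) (k : ℕ) : Ptn a b where
  n := 2 ^ k
  t := dyPt a b k
  first := by simp [dyPt]
  last := by
    simp only [dyPt, Nat.cast_pow, Nat.cast_ofNat]
    field_simp
    ring
  mono := by
    intro i _
    have : 0 ≤ (b - a) / 2 ^ k := by
      have := sub_nonneg.2 hab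
      positivity
    simp only [dyPt, Nat.cast_add, Nat.cast_one]
    linarith

/-- The sum of the two-parameter germ `Ξ` over the `k`-th dyadic partition of `[a, b]`. -/
def dySum {F : Type*} [AddCommMonoid F] (Ξ : ℝ → ℝ → F) (a b : ℝ) (k : ℕ) : F :=
  ∑ i ∈ Finset.range (2 ^ k), Ξ (dyPt a b k i) (dyPt a b k (i + 1))

/-- The germ `Ξ` is additive on `[a, b]` up to an error of order `2γ`. -/
def AlmostAdd {F : Type*} [NormedAddCommGroup F] (γ : ℝ) (Ξ : ℝ → ℝ → F) (a b K : ℝ) : Prop :=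
  ∀ s u t, a ≤ s → s ≤ u → u ≤ t → t ≤ b →
    ‖Ξ s t - Ξ s u - Ξ u t‖ ≤ K * ((u - s) ^ γ * (t - u) ^ γ)

/-- The ratio `2 ^ (1 - 2γ)` of the geometric series controlling successive dyadic sums. -/
def yRatio (γ : ℝ) : ℝ := 2 ^ (1 - 2 * γ)

/-- The constant `C_γ = 1 / (1 - 2 ^ (1 - 2γ))`, the sum of that geometric series. -/
def yConst (γ : ℝ) : ℝ := 1 / (1 - yRatio γ)

lemma yRatio_pos (γ : ℝ) : 0 < yRatio γ := Real.rpow_pos_of_pos two_pos _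

lemma yRatio_lt_one {γ : ℝ} (hγ : 1 / 2 < γ) : yRatio γ < 1 :=
  Real.rpow_lt_one_of_one_lt_of_neg one_lt_two (by linarith)

lemma one_le_yConst {γ : ℝ} (hγ : 1 / 2 < γ) : 1 ≤ yConst γ := by
  have h1 := yRatio_pos γ
  have h2 := yRatio_lt_one hγ
  rw [yConst, le_div_iff₀ (by linarith)]
  linarith

lemma dyPt_mem {a b : ℝ} (hab : a ≤ b) {k i : ℕ} (hi : i ≤ 2 ^ k) : dyPt a b k i ∈ Icc a b := by
  have h0 : 0 ≤ (b - a) / 2 ^ k := by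
    have := sub_nonneg.2 hab
    positivity
  have hi' : (i : ℝ) ≤ 2 ^ k := by exact_mod_cast hi
  have h1 : (2 ^ k : ℝ) * ((b - a) / 2 ^ k) = b - a := by field_simp
  have h2 := mul_le_mul_of_nonneg_right hi' h0
  have h3 : 0 ≤ (i : ℝ) * ((b - a) / 2 ^ k) := by positivity
  constructor <;> simp only [dyPt] <;> linarith

lemma sum_range_two_mul {F : Type*} [AddCommMonoid F] (f : ℕ → F) (n : ℕ) :
    ∑ i ∈ Finset.range (2 * n), f i = ∑ i ∈ Finset.range n, (f (2 * i) + f (2 * i + 1)) := by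
  induction n with
  | zero => simp
  | succ n ih =>
    rw [Finset.sum_range_succ, ← ih, mul_add, mul_one, Finset.sum_range_succ,
      Finset.sum_range_succ, add_assoc]

section Sewing

variable {F : Type*} [NormedAddCommGroup F] {γ : ℝ} {Ξ : ℝ → ℝ → F} {a b K : ℝ}

/-- Each of the `2 ^ k` intervals contributes an error of order `2 ^ (-2γk)` when it is halved. -/
lemma dist_dySum_succ (hγ : 0 ≤ γ) (hab : a ≤ b) (hK : 0 ≤ K) (h : AlmostAdd γ Ξ a b K)
    (k : ℕ) :
    dist (dySum Ξ a b k) (dySum Ξ a b (k + 1)) ≤ K * (b - a) ^ (2 * γ) * yRatio γ ^ k := by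
  have hba : 0 ≤ b - a := sub_nonneg.2 hab
  rw [dist_eq_norm, dySum, dySum, pow_succ' 2 k, sum_range_two_mul, ← Finset.sum_sub_distrib]
  have key : ∀ i ∈ Finset.range (2 ^ k),
      ‖Ξ (dyPt a b k i) (dyPt a b k (i + 1)) -
        (Ξ (dyPt a b (k + 1) (2 * i)) (dyPt a b (k + 1) (2 * i + 1)) +
          Ξ (dyPt a b (k + 1) (2 * i + 1)) (dyPt a b (k + 1) (2 * i + 1 + 1)))‖ ≤
        K * ((b - a) / 2 ^ k) ^ (2 * γ) := by
    intro i hi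
    have hi' : i + 1 ≤ 2 ^ k := Finset.mem_range.1 hi
    have e1 : dyPt a b (k + 1) (2 * i) = dyPt a b k i := by
      simp only [dyPt, pow_succ]; push_cast; field_simp
    have e2 : dyPt a b (k + 1) (2 * i + 1 + 1) = dyPt a b k (i + 1) := by
      simp only [dyPt, pow_succ]; push_cast; field_simp; ring
    have hm : 0 ≤ (b - a) / 2 ^ (k + 1) := by positivity
    have e3 : dyPt a b (k + 1) (2 * i + 1) - dyPt a b k i = (b - a) / 2 ^ (k + 1) := by
      simp only [dyPt, pow_succ]; push_cast; field_simp; ring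
    have e4 : dyPt a b k (i + 1) - dyPt a b (k + 1) (2 * i + 1) = (b - a) / 2 ^ (k + 1) := by
      simp only [dyPt, pow_succ]; push_cast; field_simp; ring
    rw [e1, e2, ← sub_sub]
    refine (h _ _ _ (dyPt_mem hab (by omega)).1 (by linarith) (by linarith)
      (dyPt_mem hab hi').2).trans ?_
    rw [e3, e4, two_mul, Real.rpow_add_of_nonneg (by positivity) hγ hγ]
    have : (b - a) / 2 ^ (k + 1) ≤ (b - a) / 2 ^ k := by
      gcongr
      · norm_num
      · omega
    gcongr
  refine (norm_sum_le_of_le _ key).trans (le_of_eq ?_)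
  rw [Finset.sum_const, Finset.card_range, nsmul_eq_mul, Real.div_rpow hba (by positivity),
    yRatio, ← Real.rpow_natCast (2 ^ (1 - 2 * γ)), ← Real.rpow_mul (by norm_num),
    ← Real.rpow_natCast 2 k, ← Real.rpow_mul (by norm_num), sub_mul, Real.rpow_sub (by norm_num),
    one_mul, mul_comm (2 * γ) (k : ℝ)]
  push_cast
  rw [Real.rpow_natCast]
  ring

lemma dist_dySum_lim (hγ : 1 / 2 < γ) (hab : a ≤ b) (hK : 0 ≤ K) (h : AlmostAdd γ Ξ a b K)
    {I : F} (hI : Tendsto (dySum Ξ a b) atTop (𝓝 I)) (k : ℕ) :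
    dist (dySum Ξ a b k) I ≤ K * (b - a) ^ (2 * γ) * yRatio γ ^ k / (1 - yRatio γ) :=
  dist_le_of_le_geometric_of_tendsto _ _ (yRatio_lt_one hγ)
    (fun k => dist_dySum_succ (by linarith) hab hK h k) hI k

lemma exists_lim_dySum [CompleteSpace F] (hγ : 1 / 2 < γ) (hab : a ≤ b) (hK : 0 ≤ K)
    (h : AlmostAdd γ Ξ a b K) : ∃ I, Tendsto (dySum Ξ a b) atTop (𝓝 I) :=
  cauchySeq_tendsto_of_complete (cauchySeq_of_le_geometric _ _ (yRatio_lt_one hγ)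
    (fun k => dist_dySum_succ (by linarith) hab hK h k))

/-- The sewing bound: the limit of the dyadic sums is within `C_γ K (b - a) ^ (2γ)` of the
coarsest sum `Ξ a b`, here assumed to vanish. -/
lemma norm_lim_dySum_le (hγ : 1 / 2 < γ) (hab : a ≤ b) (hK : 0 ≤ K) (h : AlmostAdd γ Ξ a b K)
    (h0 : Ξ a b = 0) {I : F} (hI : Tendsto (dySum Ξ a b) atTop (𝓝 I)) :
    ‖I‖ ≤ yConst γ * K * (b - a) ^ (2 * γ) := by
  have := dist_dySum_lim hγ hab hK h hI 0
  have e : dySum Ξ a b 0 = 0 := by simp [dySum, dyPt, h0]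
  rw [e, dist_zero_left] at this
  refine this.trans (le_of_eq ?_)
  rw [yConst]
  ring

end Sewing

/-- The limit along all partitions is in particular the limit along the dyadic ones. -/
lemma RSLimit.tendsto_dyadic {F : Type*} [NormedAddCommGroup F] {a b : ℝ} (hab : a ≤ b)
    {S : Ptn a b → F} {I : F} (h : RSLimit a b S I) :
    Tendsto (fun k => S (dyadic hab k)) atTop (𝓝 I) := by
  rw [Metric.tendsto_atTop]
  intro ε hε
  obtain ⟨δ, hδ, H⟩ := h (ε / 2) (half_pos hε)
  have hlim : Tendsto (fun k : ℕ => (b - a) * (1 / 2) ^ k) atTop (𝓝 ((b - a) * 0)) :=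
    (tendsto_pow_atTop_nhds_zero_of_lt_one (by norm_num) (by norm_num)).const_mul _
  rw [mul_zero] at hlim
  obtain ⟨N, hN⟩ := eventually_atTop.1 (hlim.eventually (ge_mem_nhds hδ))
  refine ⟨N, fun k hk => ?_⟩
  rw [dist_eq_norm]
  refine (H (dyadic hab k) ?_).trans_lt (half_lt_self hε)
  intro i _
  refine le_trans (le_of_eq ?_) (hN k hk)
  simp only [dyadic, dyPt, one_div, inv_pow]
  push_cast
  ring

/-! ### Hölder seminorms -/

section Holder

variable {F : Type*} [NormedAddCommGroup F] {γ : ℝ} {X Y : ℝ → F}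

lemma hSemi_nonneg (γ : ℝ) (X : ℝ → F) : 0 ≤ hSemi γ X := by
  apply Real.sSup_nonneg
  rintro _ ⟨s, -, t, -, -, rfl⟩
  positivity

lemma sNorm_nonneg (X : ℝ → F) : 0 ≤ sNorm X := by
  apply Real.sSup_nonneg
  rintro _ ⟨s, -, rfl⟩
  positivity

lemma HolderOn.le_hSemi (h : HolderOn γ X) {s t : ℝ} (hs : s ∈ Icc (0:ℝ) 1)
    (ht : t ∈ Icc (0:ℝ) 1) : ‖X s - X t‖ ≤ hSemi γ X * |s - t| ^ γ := by
  rcases eq_or_ne s t with rfl | hst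
  · have := hSemi_nonneg γ X
    rw [sub_self, norm_zero]
    positivity
  · have hpos : ∀ {s t : ℝ}, s ≠ t → 0 < |s - t| ^ γ := fun hne =>
      Real.rpow_pos_of_pos (abs_pos.2 (sub_ne_zero.2 hne)) _
    rw [← div_le_iff₀ (hpos hst)]
    obtain ⟨C, hC⟩ := h
    refine le_csSup ⟨C, ?_⟩ ⟨s, hs, t, ht, hst, rfl⟩
    rintro _ ⟨s', hs', t', ht', hne, rfl⟩
    exact (div_le_iff₀ (hpos hne)).2 (hC _ hs' _ ht')

/-- The Hölder bound on an ordered pair of points. -/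
lemma HolderOn.le_hSemi' (h : HolderOn γ X) {s t : ℝ} (hs : 0 ≤ s) (hst : s ≤ t)
    (ht : t ≤ 1) : ‖X t - X s‖ ≤ hSemi γ X * (t - s) ^ γ := by
  have := h.le_hSemi (s := t) (t := s) ⟨hs.trans hst, ht⟩ ⟨hs, hst.trans ht⟩
  rwa [abs_of_nonneg (sub_nonneg.2 hst)] at this

lemma HolderOn.sub (hX : HolderOn γ X) (hY : HolderOn γ Y) :
    HolderOn γ (fun ξ => X ξ - Y ξ) := by
  obtain ⟨C, hC⟩ := hX
  obtain ⟨D, hD⟩ := hY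
  refine ⟨C + D, fun s hs t ht => ?_⟩
  rw [show X s - Y s - (X t - Y t) = (X s - X t) - (Y s - Y t) by abel, add_mul]
  exact (norm_sub_le _ _).trans (add_le_add (hC s hs t ht) (hD s hs t ht))

lemma le_sNorm (h : ContinuousOn X (Icc (0:ℝ) 1)) {s : ℝ} (hs : s ∈ Icc (0:ℝ) 1) :
    ‖X s‖ ≤ sNorm X := by
  obtain ⟨C, hC⟩ := isCompact_Icc.exists_bound_of_continuousOn h
  refine le_csSup ⟨C, ?_⟩ ⟨s, hs, rfl⟩
  rintro _ ⟨t, ht, rfl⟩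
  exact hC t ht

end Holder

/-! ### The Young estimate -/

lemma norm_oProd (a b : E3) : ‖oProd a b‖ = ‖a‖ * ‖b‖ := by
  rw [oProd, ContinuousLinearMap.norm_smulRight_apply, innerSL_apply_norm, mul_comm]

lemma youngEstimate_yConst {γ : ℝ} (hγ : 1 / 2 < γ) : YoungEstimate γ (yConst γ) := by
  intro X Y hX hY η hη ξ hξ hηξ I hI
  have hK : 0 ≤ hSemi γ X * hSemi γ Y := mul_nonneg (hSemi_nonneg _ _) (hSemi_nonneg _ _)
  have hadd : AlmostAdd γ (fun s t => oProd (X s - X η) (Y t - Y s)) η ξ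
      (hSemi γ X * hSemi γ Y) := by
    intro s u t hs hsu hut ht
    have e : oProd (X s - X η) (Y t - Y s) - oProd (X s - X η) (Y u - Y s)
        - oProd (X u - X η) (Y t - Y u) = - oProd (X u - X s) (Y t - Y u) := by
      ext1 v
      simp only [oProd, sub_apply, neg_apply,
        ContinuousLinearMap.smulRight_apply, innerSL_apply_apply, inner_sub_left]
      module
    rw [e, norm_neg, norm_oProd, mul_mul_mul_comm]
    exact mul_le_mul (hX.le_hSemi' (hη.1.trans hs) hsu (hut.trans (ht.trans hξ.2)))
      (hY.le_hSemi' (hη.1.trans (hs.trans hsu)) hut (ht.trans hξ.2)) (norm_nonneg _)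
      (mul_nonneg (hSemi_nonneg _ _) (Real.rpow_nonneg (sub_nonneg.2 hsu) _))
  rw [mul_assoc (yConst γ)]
  exact norm_lim_dySum_le hγ hηξ hK hadd (by simp [oProd]) (hI.tendsto_dyadic hηξ)

/-! ### Differentiating the velocity field under the Young integral -/

/-- The contraction `B(·) v` of a matrix-valued multilinear map with a vector. -/
def appM {m : ℕ} (B : E3 [×m]→L[ℝ] M3) (v : E3) : E3 [×m]→L[ℝ] E3 :=
  (ContinuousLinearMap.apply ℝ E3 v).compContinuousMultilinearMap B

lemma appM_apply {m : ℕ} (B : E3 [×m]→L[ℝ] M3) (v : E3) (w : Fin m → E3) :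
    appM B v w = B w v := rfl

lemma norm_appM_le {m : ℕ} (B : E3 [×m]→L[ℝ] M3) (v : E3) : ‖appM B v‖ ≤ ‖B‖ * ‖v‖ := by
  refine ContinuousMultilinearMap.opNorm_le_bound (by positivity) fun w => ?_
  rw [appM_apply]
  calc ‖B w v‖ ≤ ‖B w‖ * ‖v‖ := (B w).le_opNorm v
    _ ≤ (‖B‖ * ∏ i, ‖w i‖) * ‖v‖ := by gcongr; exact B.le_opNorm w
    _ = _ := by ring

/-- The germ `∇^m A(x - Z_s) (Z_t - Z_s)` of the Young integral `∫ ∇^m A(x - Z_η) dZ_η`. -/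
def germ (A : E3 → M3) (Z : ℝ → E3) (m : ℕ) (x : E3) (s t : ℝ) : E3 [×m]→L[ℝ] E3 :=
  appM (iteratedFDeriv ℝ m A (x - Z s)) (Z t - Z s)

lemma germ_defect (A : E3 → M3) (Z : ℝ → E3) (m : ℕ) (x : E3) (s u t : ℝ) :
    germ A Z m x s t - germ A Z m x s u - germ A Z m x u t =
      appM (iteratedFDeriv ℝ m A (x - Z s) - iteratedFDeriv ℝ m A (x - Z u)) (Z t - Z u) := by
  ext1 w
  simp only [germ, appM_apply, sub_apply, map_sub]
  abel

/-- The velocity field of the `k`-th dyadic Riemann–Stieltjes sum. -/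
def velApprox (A : E3 → M3) (Z : ℝ → E3) (k : ℕ) (x : E3) : E3 :=
  youngRS A Z x (dyadic (zero_le_one (α := ℝ)) k)

lemma contDiff_summand {A : E3 → M3} {m : ℕ} (hA : ContDiff ℝ m A) (z v : E3) :
    ContDiff ℝ m (fun x => A (x - z) v) :=
  (hA.comp (contDiff_id.sub contDiff_const)).clm_apply contDiff_const

lemma contDiff_velApprox {A : E3 → M3} {m : ℕ} (hA : ContDiff ℝ m A) (Z : ℝ → E3) (k : ℕ) :
    ContDiff ℝ m (velApprox A Z k) := by
  unfold velApprox youngRS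
  exact ContDiff.sum fun _ _ => contDiff_summand hA _ _

lemma iteratedFDeriv_velApprox {A : E3 → M3} {m : ℕ} (hA : ContDiff ℝ m A) (Z : ℝ → E3) (k : ℕ)
    (x : E3) : iteratedFDeriv ℝ m (velApprox A Z k) x = dySum (germ A Z m x) 0 1 k := by
  have h1 : velApprox A Z k = fun x => ∑ i ∈ Finset.range (2 ^ k),
      A (x - Z (dyPt 0 1 k i)) (Z (dyPt 0 1 k (i + 1)) - Z (dyPt 0 1 k i)) := rfl
  rw [h1, iteratedFDeriv_fun_sum_apply fun _ _ => (contDiff_summand hA _ _).contDiffAt, dySum]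
  refine Finset.sum_congr rfl fun i _ => ?_
  set z := Z (dyPt 0 1 k i)
  have h2 := (ContinuousLinearMap.apply ℝ E3
    (Z (dyPt 0 1 k (i + 1)) - z)).iteratedFDeriv_comp_left (i := m) (n := m)
    (f := fun x => A (x - z)) (x := x)
    (hA.comp (contDiff_id.sub contDiff_const)).contDiffAt le_rfl
  rw [iteratedFDeriv_comp_sub] at h2
  exact h2

/-- A bound on `∇^{m+1} A` over a convex set makes `∇^m A` Lipschitz there. -/
lemma norm_iteratedFDeriv_sub_le {A : E3 → M3} {m : ℕ} (hA : ContDiff ℝ (m + 1 : ℕ) A) {s : Set E3}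
    (hs : Convex ℝ s) {M : ℝ} (hM : ∀ y ∈ s, ‖iteratedFDeriv ℝ (m + 1) A y‖ ≤ M) {y z : E3}
    (hy : y ∈ s) (hz : z ∈ s) :
    ‖iteratedFDeriv ℝ m A y - iteratedFDeriv ℝ m A z‖ ≤ M * ‖y - z‖ :=
  hs.norm_image_sub_le_of_norm_fderiv_le
    (fun w _ => (hA.differentiable_iteratedFDeriv (by exact_mod_cast Nat.lt_succ_self m)) w)
    (fun w hw => by rw [norm_fderiv_iteratedFDeriv]; exact hM w hw) hz hy

/-- On every ball of base points, the germs are almost additive with a common constant: the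
curve is bounded, so `∇^{m+1} A` is only evaluated on a compact set. -/
lemma exists_almostAdd_germ {γ : ℝ} {A : E3 → M3} {m : ℕ} (hA : ContDiff ℝ (m + 1 : ℕ) A)
    {Z : ℝ → E3} (hZ : MemC γ Z) (R : ℝ) :
    ∃ K, 0 ≤ K ∧ ∀ x ∈ Metric.ball (0 : E3) R, AlmostAdd γ (germ A Z m x) 0 1 K := by
  have hcont := hA.continuous_iteratedFDeriv (m := m + 1) le_rfl
  obtain ⟨M, hM⟩ := (isCompact_closedBall (0 : E3) (R + sNorm Z)).exists_bound_of_continuousOn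
    hcont.continuousOn
  refine ⟨max M 0 * hSemi γ Z * hSemi γ Z, ?_, fun x hx s u t hs hsu hut ht => ?_⟩
  · have := hSemi_nonneg γ Z
    positivity
  have hball : ∀ r ∈ Icc (0:ℝ) 1, x - Z r ∈ Metric.closedBall (0 : E3) (R + sNorm Z) := by
    intro r hr
    rw [mem_closedBall_zero_iff]
    rw [mem_ball_zero_iff] at hx
    exact (norm_sub_le _ _).trans (add_le_add hx.le (le_sNorm hZ.1.1 hr))
  have h1 := norm_iteratedFDeriv_sub_le hA (convex_closedBall (0 : E3) (R + sNorm Z))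
    (fun y hy => (hM y hy).trans (le_max_left M 0))
    (hball s ⟨hs, hsu.trans (hut.trans ht)⟩) (hball u ⟨hs.trans hsu, hut.trans ht⟩)
  rw [sub_sub_sub_cancel_left] at h1
  have h2 := hZ.2.le_hSemi' hs hsu (hut.trans ht)
  have h3 := hZ.2.le_hSemi' (hs.trans hsu) hut ht
  have := hSemi_nonneg γ Z
  have := Real.rpow_nonneg (sub_nonneg.2 hsu) γ
  rw [germ_defect]
  calc _ ≤ _ := norm_appM_le _ _
    _ ≤ (max M 0 * (hSemi γ Z * (u - s) ^ γ)) * (hSemi γ Z * (t - u) ^ γ) := by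
      gcongr
      exact h1.trans (by gcongr)
    _ = _ := by ring

/-- `∇^n V(x)` is the Young integral `∫ ∇^n A(x - Z_η) dZ_η`: for every `m ≤ n` the `m`-th
derivatives of the dyadic velocity fields converge locally uniformly, so their limits form a
Taylor series of `V` up to order `n`. -/
lemma tendsto_iteratedFDeriv {γ : ℝ} (hγ : 1 / 2 < γ) {A : E3 → M3} {n : ℕ}
    (hA : ContDiff ℝ (n + 1 : ℕ) A) {Z : ℝ → E3} (hZ : MemC γ Z) {V : E3 → E3}
    (hV : IsYoungVelocity A Z V) (x : E3) :
    Tendsto (dySum (germ A Z n x) 0 1) atTop (𝓝 (iteratedFDeriv ℝ n V x)) := by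
  have hAm : ∀ m : ℕ, m ≤ n + 1 → ContDiff ℝ m A := fun m hm => hA.of_le (by exact_mod_cast hm)
  have hex : ∀ x : E3, ∀ m : ℕ, ∃ I : E3 [×m]→L[ℝ] E3,
      m ≤ n → Tendsto (dySum (germ A Z m x) 0 1) atTop (𝓝 I) := by
    intro x m
    by_cases hm : m ≤ n
    · obtain ⟨K, hK, H⟩ := exists_almostAdd_germ (hAm (m + 1) (by omega)) hZ (‖x‖ + 1)
      obtain ⟨I, hI⟩ := exists_lim_dySum hγ zero_le_one hK (H x (by simp))
      exact ⟨I, fun _ => hI⟩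
    · exact ⟨0, fun h => absurd h hm⟩
  choose p hp using hex
  have hdist : ∀ m ≤ n, ∀ R : ℝ, ∃ K, ∀ y ∈ Metric.ball (0 : E3) R, ∀ k,
      dist (iteratedFDeriv ℝ m (velApprox A Z k) y) (p y m) ≤ K * yRatio γ ^ k := by
    intro m hm R
    obtain ⟨K, hK, H⟩ := exists_almostAdd_germ (hAm (m + 1) (by omega)) hZ R
    refine ⟨K / (1 - yRatio γ), fun y hy k => ?_⟩
    have := dist_dySum_lim hγ zero_le_one hK (H y hy) (hp y m hm) k
    rw [iteratedFDeriv_velApprox (hAm m (by omega))]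
    refine this.trans (le_of_eq ?_)
    simp only [sub_zero, Real.one_rpow]
    ring
  have hunif : ∀ m ≤ n, TendstoLocallyUniformly
      (fun k y => iteratedFDeriv ℝ m (velApprox A Z k) y) (fun y => p y m) atTop := by
    intro m hm
    rw [Metric.tendstoLocallyUniformly_iff]
    intro ε hε y
    obtain ⟨K, H⟩ := hdist m hm (‖y‖ + 1)
    refine ⟨Metric.ball 0 (‖y‖ + 1), Metric.isOpen_ball.mem_nhds (by simp), ?_⟩
    have hlim : Tendsto (fun k : ℕ => K * yRatio γ ^ k) atTop (𝓝 (K * 0)) :=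
      (tendsto_pow_atTop_nhds_zero_of_lt_one (yRatio_pos γ).le (yRatio_lt_one hγ)).const_mul _
    rw [mul_zero] at hlim
    filter_upwards [hlim.eventually (gt_mem_nhds hε)] with k hk z hz
    rw [dist_comm]
    exact (H z hz k).trans_lt hk
  have hser : HasFTaylorSeriesUpTo n V (fun y m => p y m) := by
    refine ⟨fun y => ?_, fun m hm y => ?_, fun m hm => ?_⟩
    · have h1 := hp y 0 (Nat.zero_le _)
      have h2 : Tendsto (fun k => velApprox A Z k y) atTop (𝓝 (V y)) :=
        (hV y).tendsto_dyadic zero_le_one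
      have h3 : Tendsto (fun k => (dySum (germ A Z 0 y) 0 1 k) 0) atTop (𝓝 (p y 0 0)) :=
        ((ContinuousMultilinearMap.apply ℝ (fun _ : Fin 0 => E3) E3 0).continuous.tendsto _).comp h1
      refine tendsto_nhds_unique h3 (h2.congr fun k => ?_)
      rw [← iteratedFDeriv_velApprox (hAm 0 (by omega)), iteratedFDeriv_zero_apply]
    · have hm' : m + 1 ≤ n := by exact_mod_cast hm
      refine hasFDerivAt_of_tendstoLocallyUniformlyOn (l := atTop) isOpen_univ
        (f := fun k y => iteratedFDeriv ℝ m (velApprox A Z k) y)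
        (f' := fun k y => (iteratedFDeriv ℝ (m + 1) (velApprox A Z k) y).curryLeft)
        (g := fun y => p y m) (g' := fun y => (p y (m + 1)).curryLeft)
        ?_ ?_ ?_ (mem_univ y)
      · rw [tendstoLocallyUniformlyOn_univ]
        exact (continuousMultilinearCurryLeftEquiv ℝ (fun _ : Fin (m + 1) => E3)
          E3).isometry.uniformContinuous.comp_tendstoLocallyUniformly (hunif (m + 1) hm')
      · intro k z _
        exact ((contDiff_velApprox (hAm (m + 1) (by omega)) Z k).differentiable_iteratedFDeriv
          (by exact_mod_cast Nat.lt_succ_self m) z).hasFDerivAt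
      · intro z _
        exact (hp z m (by omega)).congr fun k =>
          (iteratedFDeriv_velApprox (hAm m (by omega)) Z k z).symm
    · have hm' : m ≤ n := by exact_mod_cast hm
      exact (hunif m hm').continuous (Frequently.of_forall fun k =>
        (contDiff_velApprox (hAm m (by omega)) Z k).continuous_iteratedFDeriv le_rfl)
  rw [← hser.eq_iteratedFDeriv le_rfl x]
  exact hp x n le_rfl

/-! ### Comparing two curves -/

lemma norm_iteratedFDeriv_le_tnorm {A : E3 → M3} {j : ℕ}
    (h : BddAbove (Set.range fun x => ‖iteratedFDeriv ℝ j A x‖)) (y : E3) :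
    ‖iteratedFDeriv ℝ j A y‖ ≤ tnorm j A :=
  le_csSup h ⟨y, rfl⟩

/-- The second-order difference of `∇^n A` over the quadrilateral `a, b, c, d`: the derivative
of `τ ↦ ∇^n A(b + τ(a - b)) - ∇^n A(d + τ(c - d))` splits into a difference of directions, paid
for by `∇^{n+1} A`, and a difference of base points, paid for by `∇^{n+2} A`. -/
lemma norm_second_diff_le {A : E3 → M3} {n : ℕ} (hA : ContDiff ℝ (n + 2 : ℕ) A) {M₁ M₂ S : ℝ}
    (h₁ : ∀ y, ‖iteratedFDeriv ℝ (n + 1) A y‖ ≤ M₁)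
    (h₂ : ∀ y, ‖iteratedFDeriv ℝ (n + 2) A y‖ ≤ M₂) {a b c d : E3}
    (hac : ‖a - c‖ ≤ S) (hbd : ‖b - d‖ ≤ S) :
    ‖(iteratedFDeriv ℝ n A a - iteratedFDeriv ℝ n A b) -
        (iteratedFDeriv ℝ n A c - iteratedFDeriv ℝ n A d)‖ ≤
      M₁ * ‖(a - b) - (c - d)‖ + M₂ * S * ‖a - b‖ := by
  set G := iteratedFDeriv ℝ n A with hG
  have hdiff : Differentiable ℝ G :=
    hA.differentiable_iteratedFDeriv (by exact_mod_cast (by omega : n < n + 2))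
  have hG1 : ∀ y, ‖fderiv ℝ G y‖ ≤ M₁ := fun y => by
    rw [hG, norm_fderiv_iteratedFDeriv]; exact h₁ y
  have hM₂ : 0 ≤ M₂ := (norm_nonneg _).trans (h₂ 0)
  have hG2 : ∀ y z, ‖fderiv ℝ G y - fderiv ℝ G z‖ ≤ M₂ * ‖y - z‖ := fun y z => by
    have hiso := (continuousMultilinearCurryLeftEquiv ℝ (fun _ : Fin (n + 1) => E3) M3).dist_map
      (iteratedFDeriv ℝ (n + 1) A y) (iteratedFDeriv ℝ (n + 1) A z)
    rw [dist_eq_norm, dist_eq_norm] at hiso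
    refine hiso.le.trans ?_
    exact norm_iteratedFDeriv_sub_le (m := n + 1) hA convex_univ (fun y _ => h₂ y)
      (mem_univ y) (mem_univ z)
  have hline : ∀ (p q : E3) (τ : ℝ), HasDerivAt (fun τ : ℝ => G (q + τ • (p - q)))
      (fderiv ℝ G (q + τ • (p - q)) (p - q)) τ := fun p q τ => by
    have h := ((hasDerivAt_id τ).smul_const (p - q)).const_add q
    rw [one_smul] at h
    exact (hdiff _).hasFDerivAt.comp_hasDerivAt τ h
  have := norm_image_sub_le_of_norm_deriv_le_segment_01'
    (f := fun τ : ℝ => G (b + τ • (a - b)) - G (d + τ • (c - d)))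
    (C := M₁ * ‖(a - b) - (c - d)‖ + M₂ * S * ‖a - b‖)
    (fun τ _ => ((hline a b τ).sub (hline c d τ)).hasDerivWithinAt) ?_
  · simp only [one_smul, zero_smul, add_zero, add_sub_cancel] at this
    rwa [sub_sub_sub_comm] at this
  · intro τ hτ
    set P := b + τ • (a - b)
    set Q := d + τ • (c - d)
    have hPQ : ‖P - Q‖ ≤ S := by
      have e : P - Q = τ • (a - c) + (1 - τ) • (b - d) := by simp only [P, Q]; module
      have h0 : 0 ≤ 1 - τ := by linarith [hτ.2]
      rw [e]
      calc _ ≤ ‖τ • (a - c)‖ + ‖(1 - τ) • (b - d)‖ := norm_add_le _ _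
        _ = τ * ‖a - c‖ + (1 - τ) * ‖b - d‖ := by
          rw [norm_smul, norm_smul, Real.norm_of_nonneg hτ.1, Real.norm_of_nonneg h0]
        _ ≤ τ * S + (1 - τ) * S := by
          have := hτ.1
          gcongr
        _ = S := by ring
    have e : fderiv ℝ G P (a - b) - fderiv ℝ G Q (c - d) =
        fderiv ℝ G Q ((a - b) - (c - d)) + (fderiv ℝ G P - fderiv ℝ G Q) (a - b) := by
      rw [sub_apply, map_sub (fderiv ℝ G Q) (a - b)]
      abel
    rw [e]
    refine (norm_add_le _ _).trans (add_le_add ?_ ?_)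
    · exact (ContinuousLinearMap.le_opNorm _ _).trans (by gcongr; exact hG1 Q)
    · refine (ContinuousLinearMap.le_opNorm _ _).trans ?_
      gcongr
      exact (hG2 P Q).trans (by gcongr)

/-- The difference of the germs of `∇^n V^Y` and `∇^n V^Ỹ` is almost additive, with a constant
proportional to the distance between the curves. -/
lemma almostAdd_germ_sub {γ : ℝ} {A : E3 → M3} {n : ℕ} (hA : ContDiff ℝ (n + 2 : ℕ) A) {M₁ M₂ : ℝ}
    (h₁ : ∀ y, ‖iteratedFDeriv ℝ (n + 1) A y‖ ≤ M₁)
    (h₂ : ∀ y, ‖iteratedFDeriv ℝ (n + 2) A y‖ ≤ M₂) {Y Yt : ℝ → E3}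
    (hY : MemC γ Y) (hYt : MemC γ Yt) (x : E3) :
    AlmostAdd γ (fun s t => germ A Y n x s t - germ A Yt n x s t) 0 1
      ((M₁ + M₂) * (hSemi γ Y + hSemi γ Yt + hSemi γ Yt * hSemi γ Y) *
        hStar γ (fun ξ => Y ξ - Yt ξ)) := by
  intro s u t hs hsu hut ht
  have hM₁ : 0 ≤ M₁ := (norm_nonneg _).trans (h₁ 0)
  have hM₂ : 0 ≤ M₂ := (norm_nonneg _).trans (h₂ 0)
  have hs1 : s ∈ Icc (0:ℝ) 1 := ⟨hs, hsu.trans (hut.trans ht)⟩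
  have hu1 : u ∈ Icc (0:ℝ) 1 := ⟨hs.trans hsu, hut.trans ht⟩
  have hD := hY.2.sub hYt.2
  have hDc := hY.1.1.sub hYt.1.1
  have hYsu := hY.2.le_hSemi' hs hsu hu1.2
  have hDsu := hD.le_hSemi' hs hsu hu1.2
  have hDut := hD.le_hSemi' hu1.1 hut ht
  have hYtut := hYt.2.le_hSemi' hu1.1 hut ht
  have hSs := le_sNorm hDc hs1
  have hSu := le_sNorm hDc hu1
  have nY := hSemi_nonneg γ Y
  have nYt := hSemi_nonneg γ Yt
  rw [hStar]
  have nD := hSemi_nonneg γ (fun ξ => Y ξ - Yt ξ)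
  have nS := sNorm_nonneg (fun ξ => Y ξ - Yt ξ)
  change ‖Y s - Yt s‖ ≤ sNorm (fun ξ => Y ξ - Yt ξ) at hSs
  change ‖Y u - Yt u‖ ≤ sNorm (fun ξ => Y ξ - Yt ξ) at hSu
  set a := hSemi γ Y
  set b := hSemi γ Yt
  set D := hSemi γ (fun ξ => Y ξ - Yt ξ)
  set S := sNorm (fun ξ => Y ξ - Yt ξ)
  have np := Real.rpow_nonneg (sub_nonneg.2 hsu) γ
  have nq := Real.rpow_nonneg (sub_nonneg.2 hut) γ
  set p := (u - s) ^ γ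
  set q := (t - u) ^ γ
  set G := iteratedFDeriv ℝ n A with hG
  have hfirst : ‖G (x - Y s) - G (x - Y u)‖ ≤ M₁ * (a * p) := by
    have := norm_iteratedFDeriv_sub_le (hA.of_le (by exact_mod_cast (by omega : n + 1 ≤ n + 2)))
      convex_univ (fun y _ => h₁ y) (mem_univ (x - Y s)) (mem_univ (x - Y u))
    rw [sub_sub_sub_cancel_left] at this
    exact this.trans (by gcongr)
  have hsecond : ‖(G (x - Y s) - G (x - Y u)) - (G (x - Yt s) - G (x - Yt u))‖ ≤
      M₁ * (D * p) + M₂ * S * (a * p) := by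
    have := norm_second_diff_le hA h₁ h₂ (a := x - Y s) (b := x - Y u) (c := x - Yt s)
      (d := x - Yt u) (S := S) (by rwa [sub_sub_sub_cancel_left, norm_sub_rev])
      (by rwa [sub_sub_sub_cancel_left, norm_sub_rev])
    rw [sub_sub_sub_cancel_left, sub_sub_sub_cancel_left,
      sub_sub_sub_comm (Y u)] at this
    exact this.trans (by gcongr)
  have e : germ A Y n x s t - germ A Yt n x s t - (germ A Y n x s u - germ A Yt n x s u)
      - (germ A Y n x u t - germ A Yt n x u t) =
      appM (G (x - Y s) - G (x - Y u)) ((Y t - Yt t) - (Y u - Yt u)) +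
      appM ((G (x - Y s) - G (x - Y u)) - (G (x - Yt s) - G (x - Yt u))) (Yt t - Yt u) := by
    rw [show germ A Y n x s t - germ A Yt n x s t - (germ A Y n x s u - germ A Yt n x s u)
      - (germ A Y n x u t - germ A Yt n x u t) =
      (germ A Y n x s t - germ A Y n x s u - germ A Y n x u t) -
      (germ A Yt n x s t - germ A Yt n x s u - germ A Yt n x u t) by abel,
      germ_defect, germ_defect]
    ext1 w
    simp only [hG, appM_apply, add_apply, sub_apply, map_sub]
    abel
  rw [e]
  calc _ ≤ _ := norm_add_le _ _
    _ ≤ M₁ * (a * p) * (D * q) + (M₁ * (D * p) + M₂ * S * (a * p)) * (b * q) :=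
      add_le_add
        ((norm_appM_le _ _).trans (mul_le_mul hfirst hDut (norm_nonneg _) (by positivity)))
        ((norm_appM_le _ _).trans (mul_le_mul hsecond hYtut (norm_nonneg _) (by positivity)))
    _ = (M₁ * (a + b) * D + M₂ * (b * a) * S) * (p * q) := by ring
    _ ≤ (M₁ * (a + b + b * a) * (S + D) + M₂ * (a + b + b * a) * (S + D)) * (p * q) := by
      have hba : 0 ≤ b * a := mul_nonneg nYt nY
      have g₁ : a + b ≤ a + b + b * a := by linarith
      have g₂ : b * a ≤ a + b + b * a := by linarith
      refine mul_le_mul_of_nonneg_right (add_le_add ?_ ?_) (mul_nonneg np nq)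
      · exact mul_le_mul (mul_le_mul_of_nonneg_left g₁ hM₁) (by linarith) nD (by positivity)
      · exact mul_le_mul (mul_le_mul_of_nonneg_left g₂ hM₂) (by linarith) nS (by positivity)
    _ = _ := by ring

/-- For `1/2 < γ ≤ 1` there is a constant `C_γ ≥ 1` depending only on `γ`
(realizing the Young integral estimate) such that for every matrix field `A` with
`‖∇^{n+1} A‖_1 < ∞` and closed `γ`-Hölder curves `Y, Ỹ ∈ 𝒞^γ`, the Young velocity fields
satisfy `‖∇^n V^Y - ∇^n V^Ỹ‖ ≤ C_γ ‖∇^{n+1} A‖_1 (‖Y‖_γ + ‖Ỹ‖_γ + ‖Ỹ‖_γ ‖Y‖_γ) ‖Y - Ỹ‖_γ^*`. -/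
theorem statement_4 (γ : ℝ) (hγ : 1 / 2 < γ) (hγ1 : γ ≤ 1) :
    ∃ C : ℝ, 1 ≤ C ∧ YoungEstimate γ C ∧
      ∀ (A : E3 → M3) (n : ℕ),
        NablaBdd (n + 1) 1 A →
        ∀ Y Yt : ℝ → E3, MemC γ Y → MemC γ Yt →
        ∀ V Vt : E3 → E3, IsYoungVelocity A Y V → IsYoungVelocity A Yt Vt →
          ∀ x : E3,
            ‖iteratedFDeriv ℝ n V x - iteratedFDeriv ℝ n Vt x‖ ≤
              C * nablaNorm (n + 1) 1 A *
                (hSemi γ Y + hSemi γ Yt + hSemi γ Yt * hSemi γ Y) *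
                hStar γ (fun ξ => Y ξ - Yt ξ) := by
  refine ⟨yConst γ, one_le_yConst hγ, youngEstimate_yConst hγ, ?_⟩
  intro A n hA Y Yt hY hYt V Vt hV hVt x
  have hA2 : ContDiff ℝ (n + 2 : ℕ) A := by
    have := hA.1
    exact_mod_cast this
  have hA1 : ContDiff ℝ (n + 1 : ℕ) A :=
    hA2.of_le (by exact_mod_cast (by omega : n + 1 ≤ n + 2))
  have hadd := almostAdd_germ_sub hA2
    (norm_iteratedFDeriv_le_tnorm (hA.2 (n + 1) le_rfl (by omega)))
    (norm_iteratedFDeriv_le_tnorm (hA.2 (n + 2) (by omega) le_rfl)) hY hYt x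
  have hN : nablaNorm (n + 1) 1 A = tnorm (n + 1) A + tnorm (n + 2) A := by
    simp [nablaNorm, Finset.sum_range_succ]
  have htn : ∀ j, 0 ≤ tnorm j A := fun j => by
    apply Real.sSup_nonneg
    rintro _ ⟨y, rfl⟩
    positivity
  have hlim := (tendsto_iteratedFDeriv hγ hA1 hY hV x).sub
    (tendsto_iteratedFDeriv hγ hA1 hYt hVt x)
  have hlim' : Tendsto (dySum (fun s t => germ A Y n x s t - germ A Yt n x s t) 0 1) atTop
      (𝓝 (iteratedFDeriv ℝ n V x - iteratedFDeriv ℝ n Vt x)) :=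
    hlim.congr fun k => by simp only [dySum, Finset.sum_sub_distrib]
  -- The curves are closed, so the coarsest sums `∇^n A(x - Y₀) (Y₁ - Y₀)` vanish.
  have h0 : germ A Y n x 0 1 - germ A Yt n x 0 1 = 0 := by
    ext1 w
    simp [germ, appM_apply, hY.1.2, hYt.1.2]
  have hK : 0 ≤ (tnorm (n + 1) A + tnorm (n + 2) A) *
      (hSemi γ Y + hSemi γ Yt + hSemi γ Yt * hSemi γ Y) * hStar γ (fun ξ => Y ξ - Yt ξ) := by
    have := hSemi_nonneg γ Y
    have := hSemi_nonneg γ Yt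
    have := htn (n + 1)
    have := htn (n + 2)
    have : 0 ≤ hStar γ (fun ξ => Y ξ - Yt ξ) := add_nonneg (sNorm_nonneg _) (hSemi_nonneg _ _)
    positivity
  have := norm_lim_dySum_le hγ zero_le_one hK hadd h0 hlim'
  rw [hN]
  simpa only [sub_zero, Real.one_rpow, mul_one, ← mul_assoc] using this

end
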